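/- Frame correspondence for QC2_=: for every selection frame F, every theorem of QC2_= is valid in F (with respect to L_=-models based on F, where identity is interpreted by the identity clause) if and only if F is weakly Stalnakerian and globally constant. -/

import Mathlib

/-!
Soundness is an induction on derivations. The quantifier rules and `x = y ⊃ (φ ≡ φ[y/x])` rest on
the coincidence lemma `sat_congr` (satisfaction depends only on the values of the free variables)
and the substitution lemma `sat_substV` (substituting `σ` in `φ` amounts to evaluating `φ` under
`g ∘ σ`). Each axiom on `>` follows from its frame condition. Constancy of the domains gives (UI),
since the value of `y` then lies in `d(w)`, and (C∀), since every individual in the domain of a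
selected world then lies in `d(w)`. Success makes `¬¬(x = y) > ⊥` vacuous when `x ≠ y`, because
identity does not depend on the world.

Conversely, each frame condition is read off from one axiom. Interpreting 0-place predicates by
arbitrary sets of worlds, (ID) gives Success, (Cen) with consequent `f(P,w)` gives Weak Centering,
(CSO) with `χ` denoting `f(P,w)` gives the inclusion `f(Q,w) ⊆ f(P,w)` and hence Uniformity by
symmetry, and (CEM) with `ψ` denoting a singleton gives Uniqueness. Interpreting a 1-place
predicate at `w` by `d(w)`, the axiom (UI) says that every individual belongs to `d(w)`.
-/

universe u

/-- Formulas of the language `L_=` of quantified conditional logic with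
identity: atomic formulas `P^n_p(x_1,…,x_n)`, identity statements `x = y`,
negation, material implication, the conditional `>`, and universal
quantification. -/
inductive FormulaE : Type where
  | atom : (n : ℕ) → ℕ → (Fin n → ℕ) → FormulaE
  | eq : ℕ → ℕ → FormulaE
  | neg : FormulaE → FormulaE
  | imp : FormulaE → FormulaE → FormulaE
  | cond : FormulaE → FormulaE → FormulaE
  | all : ℕ → FormulaE → FormulaE

namespace FormulaE

/-- `⊤`, defined classically. -/
def top : FormulaE := imp (atom 0 0 Fin.elim0) (atom 0 0 Fin.elim0)
/-- `⊥`, defined classically. -/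
def bot : FormulaE := neg top
/-- Conjunction, defined classically. -/
def land (φ ψ : FormulaE) : FormulaE := neg (imp φ (neg ψ))
/-- Disjunction, defined classically. -/
def lor (φ ψ : FormulaE) : FormulaE := imp (neg φ) ψ
/-- Biconditional `≡`, defined classically. -/
def biimp (φ ψ : FormulaE) : FormulaE := land (imp φ ψ) (imp ψ φ)
/-- Existential quantification, defined classically. -/
def ex (x : ℕ) (φ : FormulaE) : FormulaE := neg (all x (neg φ))
/-- `◇φ := ¬(φ > ⊥)`. -/
def dia (φ : FormulaE) : FormulaE := neg (cond φ bot)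
/-- `□φ := ¬φ > ⊥`. -/
def box (φ : FormulaE) : FormulaE := cond (neg φ) bot

/-- The free variables of a formula. -/
def freeVars : FormulaE → Finset ℕ
  | atom _ _ a => Finset.image a Finset.univ
  | eq x y => {x, y}
  | neg φ => freeVars φ
  | imp φ ψ => freeVars φ ∪ freeVars ψ
  | cond φ ψ => freeVars φ ∪ freeVars ψ
  | all x φ => freeVars φ \ {x}

/-- Capture-avoiding simultaneous substitution of variables (bound variables
are renamed as needed). -/
def substV (σ : ℕ → ℕ) : FormulaE → FormulaE
  | atom n p a => atom n p fun i => σ (a i)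
  | eq x y => eq (σ x) (σ y)
  | neg φ => neg (substV σ φ)
  | imp φ ψ => imp (substV σ φ) (substV σ ψ)
  | cond φ ψ => cond (substV σ φ) (substV σ ψ)
  | all x φ =>
      let img := ((freeVars φ).erase x).image σ
      let x' := if x ∈ img then img.sup id + 1 else x
      all x' (substV (Function.update σ x x') φ)

end FormulaE

/-- `subst1 x y φ` is `φ[y/x]`: the capture-avoiding substitution of the
variable `y` for all free occurrences of the variable `x` in `φ`. -/
def subst1 (x y : ℕ) (φ : FormulaE) : FormulaE :=
  FormulaE.substV (Function.update id x y) φ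

/-- `φ` is a substitution instance of a propositional tautology: every
Boolean valuation of formulas commuting with `¬` and `⊃` makes `φ` true. -/
def IsTautInstance (φ : FormulaE) : Prop :=
  ∀ v : FormulaE → Bool,
    (∀ ψ, v (FormulaE.neg ψ) = !(v ψ)) →
    (∀ ψ χ, v (FormulaE.imp ψ χ) = (!(v ψ) || v χ)) →
    v φ = true

/-- `conjs ψ l` is the conjunction `ψ ∧ ⋯` of `ψ` followed by the formulas
in `l`. -/
def conjs : FormulaE → List FormulaE → FormulaE
  | φ, [] => φ
  | φ, ψ :: l => FormulaE.land φ (conjs ψ l)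

/-- The logic `QC2_=`: `QC2` formulated over `L_=`, extended with the axioms
`x = x`; `x = y ⊃ (φ ≡ φ[y/x])`; and `x ≠ y ⊃ □(x ≠ y)`. -/
inductive QC2Eq : FormulaE → Prop where
  | taut {φ} : IsTautInstance φ → QC2Eq φ
  | id (φ) : QC2Eq (FormulaE.cond φ φ)
  | cso (φ ψ χ) :
      QC2Eq (.imp (.land (.cond φ ψ) (.land (.cond ψ φ) (.cond φ χ))) (.cond ψ χ))
  | cen (φ ψ) : QC2Eq (.imp (.cond φ ψ) (.imp φ ψ))
  | cem (φ ψ) : QC2Eq (.lor (.cond φ ψ) (.cond φ (.neg ψ)))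
  | ui (x y : ℕ) (φ) : QC2Eq (.imp (.all x φ) (subst1 x y φ))
  | callax (x : ℕ) (φ ψ) (h : x ∉ φ.freeVars) :
      QC2Eq (.imp (.all x (.cond φ ψ)) (.cond φ (.all x ψ)))
  | mp {φ ψ} : QC2Eq (.imp φ ψ) → QC2Eq φ → QC2Eq ψ
  | crule {φ χ ψ : FormulaE} {l : List FormulaE} :
      QC2Eq (.imp (conjs ψ l) χ) →
      QC2Eq (.imp (conjs (.cond φ ψ) (l.map (.cond φ))) (.cond φ χ))
  | gen {ψ : FormulaE} {x y : ℕ} {φ : FormulaE} :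
      y ∉ ψ.freeVars → y ∉ (FormulaE.all x φ).freeVars →
      QC2Eq (.imp ψ (subst1 x y φ)) → QC2Eq (.imp ψ (.all x φ))
  | reflAx (x : ℕ) : QC2Eq (.eq x x)
  | substAx (x y : ℕ) (φ) : QC2Eq (.imp (.eq x y) (.biimp φ (subst1 x y φ)))
  | necDiff (x y : ℕ) :
      QC2Eq (.imp (.neg (.eq x y)) (FormulaE.box (.neg (.eq x y))))

/-- A selection frame `(W, R, f, D, d)`. -/
structure SelFrame : Type (u + 1) where
  W : Type u
  Wne : Nonempty W
  R : W → W → Prop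
  f : Set W → W → Set W
  D : Type u
  Dne : Nonempty D
  d : W → Set D
  f_sub : ∀ P w, f P w ⊆ {v | R w v}

/-- A selection model based on a selection frame. -/
structure SelModel (F : SelFrame.{u}) : Type u where
  I : (n : ℕ) → ℕ → F.W → Set (Fin n → F.D)

/-- Satisfaction `M,w,g ⊨ φ` in a selection model, with identity interpreted
by the clause `M,w,g ⊨ x = y` iff `g(x) = g(y)`. -/
def Sat {F : SelFrame.{u}} (M : SelModel F) : FormulaE → F.W → (ℕ → F.D) → Prop
  | .atom n p a, w, g => (fun i => g (a i)) ∈ M.I n p w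
  | .eq x y, _, g => g x = g y
  | .neg φ, w, g => ¬ Sat M φ w g
  | .imp φ ψ, w, g => Sat M φ w g → Sat M ψ w g
  | .cond φ ψ, w, g => F.f {v | Sat M φ v g} w ⊆ {v | Sat M ψ v g}
  | .all x φ, w, g => ∀ a ∈ F.d w, Sat M φ w (Function.update g x a)

/-- An `L_=`-formula is valid in a selection frame if it holds at every world
under every assignment in every model based on that frame. -/
def FrameValid (F : SelFrame.{u}) (φ : FormulaE) : Prop :=
  ∀ (M : SelModel F) (w : F.W) (g : ℕ → F.D), Sat M φ w g

namespace SelFrame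

variable (F : SelFrame.{u})

/-- (Success) `f(P,w) ⊆ P`. -/
def Success : Prop := ∀ P w, F.f P w ⊆ P
/-- (Weak Centering) `w ∈ P` implies `w ∈ f(P,w)`. -/
def WeakCentering : Prop := ∀ P w, w ∈ P → w ∈ F.f P w
/-- (Uniformity) if `f(P,w) ⊆ Q` and `f(Q,w) ⊆ P` then `f(P,w) = f(Q,w)`. -/
def Uniformity : Prop := ∀ P Q w, F.f P w ⊆ Q → F.f Q w ⊆ P → F.f P w = F.f Q w
/-- (Uniqueness) `f(P,w)` has at most one element. -/
def Uniqueness : Prop := ∀ P w, (F.f P w).Subsingleton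
/-- A selection frame is weakly Stalnakerian if it satisfies Success, Weak
Centering, Uniformity, and Uniqueness. -/
def WeaklyStalnakerian : Prop :=
  F.Success ∧ F.WeakCentering ∧ F.Uniformity ∧ F.Uniqueness
/-- A selection frame is globally constant if `d(w) = D` for all `w`. -/
def GloballyConstant : Prop := ∀ w, F.d w = Set.univ

end SelFrame

/-- `F(x)`: the fixed 1-place predicate (index 0) applied to variable `x`. -/
def Fp (x : ℕ) : FormulaE := .atom 1 0 fun _ => x

/-- The sentence `DS := ∃x⊤ ∧ ∀x ◇F(x) ∧ ∀x∃y((F(x) ∨ F(y)) > ¬F(x))`. -/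
def DS : FormulaE :=
  .land (.ex 0 .top)
    (.land (.all 0 (.dia (Fp 0)))
      (.all 0 (.ex 1 (.cond (.lor (Fp 0) (Fp 1)) (.neg (Fp 0))))))

/-! ### Satisfaction, coincidence and substitution -/

section Semantics

variable {F : SelFrame.{u}} (M : SelModel F)

theorem sat_land (φ ψ : FormulaE) (w : F.W) (g : ℕ → F.D) :
    Sat M (.land φ ψ) w g ↔ Sat M φ w g ∧ Sat M ψ w g := by
  simp [FormulaE.land, Sat]

theorem sat_lor (φ ψ : FormulaE) (w : F.W) (g : ℕ → F.D) :
    Sat M (.lor φ ψ) w g ↔ Sat M φ w g ∨ Sat M ψ w g := by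
  simp only [FormulaE.lor, Sat]; tauto

theorem sat_biimp (φ ψ : FormulaE) (w : F.W) (g : ℕ → F.D) :
    Sat M (.biimp φ ψ) w g ↔ (Sat M φ w g ↔ Sat M ψ w g) := by
  rw [FormulaE.biimp, sat_land]; simp only [Sat]; tauto

theorem sat_conjs (φ : FormulaE) (l : List FormulaE) (w : F.W) (g : ℕ → F.D) :
    Sat M (conjs φ l) w g ↔ Sat M φ w g ∧ ∀ χ ∈ l, Sat M χ w g := by
  induction l generalizing φ with
  | nil => simp [conjs]
  | cons ψ l ih => simp [conjs, sat_land, ih]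

/-- Coincidence lemma. -/
theorem sat_congr (φ : FormulaE) : ∀ (w : F.W) (g h : ℕ → F.D),
    (∀ x ∈ φ.freeVars, g x = h x) → (Sat M φ w g ↔ Sat M φ w h) := by
  induction φ with
  | atom n p a =>
    intro w g h H
    have : (fun i => g (a i)) = fun i => h (a i) := by
      funext i; exact H _ (by simp [FormulaE.freeVars])
    simp only [Sat, this]
  | eq x y =>
    intro w g h H
    simp only [Sat, H x (by simp [FormulaE.freeVars]), H y (by simp [FormulaE.freeVars])]
  | neg φ ih =>
    intro w g h H
    simp only [Sat, ih w g h H]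
  | imp φ ψ ih₁ ih₂ =>
    intro w g h H
    simp only [FormulaE.freeVars, Finset.mem_union] at H
    simp only [Sat, ih₁ w g h fun x hx => H x (.inl hx), ih₂ w g h fun x hx => H x (.inr hx)]
  | cond φ ψ ih₁ ih₂ =>
    intro w g h H
    simp only [FormulaE.freeVars, Finset.mem_union] at H
    simp only [Sat, fun v => ih₁ v g h fun x hx => H x (.inl hx),
      fun v => ih₂ v g h fun x hx => H x (.inr hx)]
  | all x φ ih =>
    intro w g h H
    simp only [Sat]
    refine forall₂_congr fun a _ => ih w _ _ fun z hz => ?_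
    rcases eq_or_ne z x with rfl | hzx
    · simp
    · simpa [hzx] using H z (by simp [FormulaE.freeVars, hz, hzx])

/-- Changing the value of a variable that is not free in `φ` does not matter. -/
theorem sat_update {φ : FormulaE} {x : ℕ} (hx : x ∉ φ.freeVars) (w : F.W) (g : ℕ → F.D)
    (a : F.D) : Sat M φ w (Function.update g x a) ↔ Sat M φ w g :=
  sat_congr M φ w _ _ fun z hz => Function.update_of_ne (by rintro rfl; exact hx hz) _ _

/-- Substitution lemma. In the quantifier case, the renamed bound variable lies outside the image
of the remaining free variables, so updating it does not disturb their values. -/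
theorem sat_substV (φ : FormulaE) : ∀ (σ : ℕ → ℕ) (w : F.W) (g : ℕ → F.D),
    Sat M (φ.substV σ) w g ↔ Sat M φ w (g ∘ σ) := by
  induction φ with
  | atom n p a => intro σ w g; rfl
  | eq x y => intro σ w g; rfl
  | neg φ ih => intro σ w g; simp only [FormulaE.substV, Sat, ih]
  | imp φ ψ ih₁ ih₂ => intro σ w g; simp only [FormulaE.substV, Sat, ih₁, ih₂]
  | cond φ ψ ih₁ ih₂ => intro σ w g; simp only [FormulaE.substV, Sat, ih₁, ih₂]
  | all x φ ih =>
    intro σ w g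
    simp only [FormulaE.substV]
    generalize himg : (φ.freeVars.erase x).image σ = img
    generalize hx' : (if x ∈ img then img.sup id + 1 else x) = x'
    have hfresh : x' ∉ img := by
      rw [← hx']
      split_ifs with hx
      · intro h
        have := Finset.le_sup (f := id) h
        simp only [id] at this
        omega
      · exact hx
    simp only [Sat]
    refine forall₂_congr fun a _ => ?_
    rw [ih]
    refine sat_congr M φ w _ _ fun z hz => ?_
    rcases eq_or_ne z x with rfl | hzx
    · simp
    · have hσ : σ z ≠ x' := fun h => hfresh <| by
        rw [← h, ← himg]
        exact Finset.mem_image_of_mem σ (Finset.mem_erase.2 ⟨hzx, hz⟩)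
      simp [hzx, hσ]

theorem sat_subst1 (x y : ℕ) (φ : FormulaE) (w : F.W) (g : ℕ → F.D) :
    Sat M (subst1 x y φ) w g ↔ Sat M φ w (Function.update g x (g y)) := by
  rw [subst1, sat_substV, Function.comp_update, Function.comp_id]

theorem sat_of_taut {φ : FormulaE} (h : IsTautInstance φ) (w : F.W) (g : ℕ → F.D) :
    Sat M φ w g := by
  classical
  have := h (fun ψ => decide (Sat M ψ w g)) (fun ψ => by
      rw [Bool.eq_iff_iff]
      simp only [decide_eq_true_iff, Bool.not_eq_true', decide_eq_false_iff_not]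
      rfl)
    (fun ψ χ => by rw [Bool.eq_iff_iff]; simp [Sat, imp_iff_not_or])
  simpa using this

end Semantics

/-! ### Soundness -/

theorem QC2Eq.frameValid {F : SelFrame.{u}} (hS : F.WeaklyStalnakerian)
    (hG : F.GloballyConstant) {φ : FormulaE} (h : QC2Eq φ) : FrameValid F φ := by
  obtain ⟨hsucc, hcen, hunif, huniq⟩ := hS
  induction h with
  | taut h => exact fun M w g => sat_of_taut M h w g
  | id φ => exact fun M w g => hsucc _ _
  | cso φ ψ χ =>
    intro M w g
    simp only [Sat, sat_land]
    rintro ⟨h₁, h₂, h₃⟩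
    exact hunif _ _ _ h₁ h₂ ▸ h₃
  | cen φ ψ => exact fun M w g h hφ => h (hcen _ _ hφ)
  | cem φ ψ =>
    intro M w g
    rw [sat_lor]
    by_contra! hc
    simp only [Sat, Set.not_subset] at hc
    obtain ⟨⟨u, hu, hu'⟩, v, hv, hv'⟩ := hc
    rw [huniq _ _ hv hu] at hv'
    exact hv' hu'
  | ui x y φ =>
    intro M w g h
    exact (sat_subst1 M x y φ w g).2 (h _ (hG w ▸ Set.mem_univ _))
  | callax x φ ψ hx =>
    -- An individual `a` of the selected world `v` also belongs to `d(w) = D`.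
    intro M w g h v hv a _
    have := h a (hG w ▸ Set.mem_univ _)
    simp only [Sat, sat_update M hx] at this
    exact this hv
  | mp _ _ ih₁ ih₂ => exact fun M w g => ih₁ M w g (ih₂ M w g)
  | crule _ ih =>
    intro M w g h v hv
    obtain ⟨h₁, h₂⟩ := (sat_conjs ..).1 h
    exact ih M v g <| (sat_conjs ..).2
      ⟨h₁ hv, fun χ hχ => h₂ _ (List.mem_map_of_mem hχ) hv⟩
  | @gen ψ x y φ hψ hφ _ ih =>
    intro M w g h
    -- Evaluate the premise with `y` denoting `a`; this changes neither `ψ` nor `∀xφ`.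
    have key : Sat M (.all x φ) w g ↔ ∀ a ∈ F.d w, Sat M φ w (Function.update g x a) := Iff.rfl
    rw [key]
    intro a ha
    have h' := ih M w (Function.update g y a) ((sat_update M hψ w g a).2 h)
    rw [sat_subst1, Function.update_self] at h'
    refine (sat_congr M φ w _ _ fun z hz => ?_).1 h'
    rcases eq_or_ne z x with rfl | hzx
    · simp
    · have hzy : z ≠ y := by
        rintro rfl
        exact hφ (by simp [FormulaE.freeVars, hz, hzx])
      simp [hzx, hzy]
  | reflAx x => exact fun M w g => rfl
  | substAx x y φ =>
    intro M w g h
    have h : g x = g y := h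
    rw [sat_biimp, sat_subst1, ← h, Function.update_eq_self]
  | necDiff x y =>
    intro M w g h v hv
    exact absurd h (hsucc _ _ hv)

/-! ### Frame conditions from validity -/

/-- The model in which, for every `n`, the `n`-place predicate with index `p` expresses the
proposition `A p`, whatever its arguments. -/
def propModel (F : SelFrame.{u}) (A : ℕ → Set F.W) : SelModel F :=
  ⟨fun _ p w => {_a | w ∈ A p}⟩

/-- The 0-place atomic formula with index `p`. -/
def propAtom (p : ℕ) : FormulaE := .atom 0 p Fin.elim0

/-- The interpretation making the predicates with index `0`, `1`, `2` express `P`, `Q`, `S`. -/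
def threeProps {W : Type u} (P Q S : Set W) : ℕ → Set W
  | 0 => P
  | 1 => Q
  | _ => S

/-- (CSO), with `χ` denoting `f(P,w)`. -/
theorem uniformity_half {F : SelFrame.{u}} (H : ∀ φ, QC2Eq φ → FrameValid F φ)
    (P Q : Set F.W) (w : F.W) (h₁ : F.f P w ⊆ Q) (h₂ : F.f Q w ⊆ P) : F.f Q w ⊆ F.f P w := by
  obtain ⟨a⟩ := F.Dne
  have := H _ (.cso (propAtom 0) (propAtom 1) (propAtom 2))
    (propModel F (threeProps P Q (F.f P w))) w fun _ => a
  exact this ((sat_land ..).2 ⟨h₁, (sat_land ..).2 ⟨h₂, subset_rfl⟩⟩)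

theorem weaklyStalnakerian_of_valid {F : SelFrame.{u}}
    (H : ∀ φ, QC2Eq φ → FrameValid F φ) : F.WeaklyStalnakerian := by
  obtain ⟨a⟩ := F.Dne
  refine ⟨fun P w => ?_, fun P w hw => ?_, fun P Q w h₁ h₂ => ?_, fun P w u hu v hv => ?_⟩
  · exact H _ (.id (propAtom 0)) (propModel F fun _ => P) w fun _ => a
  · exact H _ (.cen (propAtom 0) (propAtom 1)) (propModel F (threeProps P (F.f P w) ∅)) w
      (fun _ => a) subset_rfl hw
  · exact (uniformity_half H Q P w h₂ h₁).antisymm (uniformity_half H P Q w h₁ h₂)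
  · -- With `ψ` true exactly at `u`, the case `φ > ¬ψ` is excluded by `u` itself.
    have := (sat_lor ..).1 <| H _ (.cem (propAtom 0) (propAtom 1))
      (propModel F (threeProps P {u} ∅)) w fun _ => a
    rcases this with h | h
    · exact (Set.mem_singleton_iff.1 (h hv)).symm
    · exact absurd (Set.mem_singleton u) (h hu)

theorem globallyConstant_of_valid {F : SelFrame.{u}}
    (H : ∀ φ, QC2Eq φ → FrameValid F φ) : F.GloballyConstant := by
  refine fun w => Set.eq_univ_of_forall fun a => ?_
  let M : SelModel F := ⟨fun _ _ v => {b | ∀ i, b i ∈ F.d v}⟩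
  have h := H _ (.ui 0 1 (Fp 0)) M w (fun _ => a) (fun b hb i => by simpa using hb)
  rw [sat_subst1] at h
  simpa using h 0

/-- Frame correspondence for `QC2_=`: for every selection frame
`F`, every theorem of `QC2_=` is valid in `F` (with respect to
`L_=`-models based on `F`, where identity is interpreted by the identity
clause) if and only if `F` is weakly Stalnakerian and globally constant. -/
theorem QC2Eq_frame_correspondence (F : SelFrame.{u}) :
    (∀ φ : FormulaE, QC2Eq φ → FrameValid F φ) ↔
      (F.WeaklyStalnakerian ∧ F.GloballyConstant) :=
  ⟨fun H => ⟨weaklyStalnakerian_of_valid H, globallyConstant_of_valid H⟩,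
    fun h _ hφ => hφ.frameValid h.1 h.2⟩
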